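/- arXiv:1105.4216 — 8 statements merged into one kernel-verified Lean document; each statement's English description precedes it below -/
import Mathlib

section
/- Let γ > 1, K > 0, and let C, c0, c1, c2 be real constants. Set a(t) = c0 + c1·t, b(t) = 3c0·c1·t + (3/2)·c1²·t² + c2, Q(t,x,y,z) = C²(x² + y² + z² − xy − yz − xz) − c1·(x + y + z) + b(t), and on the open region where Q > 0 define ρ(t,x,y,z) = ((γ−1)/(K·γ) · Q(t,x,y,z))^{1/(γ−1)}, u1 = a(t) + C(y − z), u2 = a(t) + C(−x + z), u3 = a(t) + C(x − y). Then at every point (t,x,y,z) with Q(t,x,y,z) > 0, the continuity equation holds: ∂ρ/∂t + ∂(ρ·u1)/∂x + ∂(ρ·u2)/∂y + ∂(ρ·u3)/∂z = 0. -/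
/-!
Each velocity component `uᵢ` is independent of the `i`-th space variable, so `∇·u = 0` and the
continuity equation reduces to the transport equation `ρ_t + u·∇ρ = 0`. Since `ρ` is a function
of `Q` alone, all four derivatives of `ρ` share the factor `dρ/dQ`, and it is enough that
`Q_t + u·∇Q = 0`, a polynomial identity: `Q_t = 3 c1 a(t)` cancels the contribution of
`-c1 (x + y + z)` transported by the translation `a(t)(1,1,1)`, and the rotational part of `u`
(about the axis `(1,1,1)`) preserves both `x + y + z` and the quadratic form.
-/

/-- One-variable chain rule for a density that is prescribed as `(k q) ^ p` only where `q > 0`: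
positivity of `q` is an open condition, so the formula holds near the base point. -/
lemma hasDerivAt_density {q r : ℝ → ℝ} {k p q' s₀ : ℝ} (hk : 0 < k)
    (hq : HasDerivAt q q' s₀) (h₀ : 0 < q s₀)
    (hr : ∀ s, 0 < q s → r s = (k * q s) ^ p) :
    HasDerivAt r (p * (k * q s₀) ^ (p - 1) * k * q') s₀ := by
  have h1 : HasDerivAt (fun s => (k * q s) ^ p) (p * (k * q s₀) ^ (p - 1) * k * q') s₀ := by
    convert (hq.const_mul k).rpow_const (p := p) (Or.inl (mul_pos hk h₀).ne') using 1
    ring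
  refine h1.congr_of_eventuallyEq ?_
  filter_upwards [hq.continuousAt.eventually (lt_mem_nhds h₀)] with s hs
  exact hr s hs

/-- Derivative of a quadratic polynomial, given only by its pointwise values. -/
lemma hasDerivAt_quadratic {q : ℝ → ℝ} (A B D s₀ : ℝ)
    (h : ∀ s, q s = A * s ^ 2 + B * s + D) : HasDerivAt q (2 * A * s₀ + B) s₀ := by
  rw [funext h]
  have h1 : HasDerivAt (fun s : ℝ => A * s ^ 2 + B * s + D) _ s₀ :=
    (((hasDerivAt_pow 2 s₀).const_mul A).add ((hasDerivAt_id s₀).const_mul B)).add_const D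
  refine h1.congr_deriv ?_
  norm_num
  ring

/-- Yuen's rotational solution for `γ > 1` satisfies the continuity equation
`ρ_t + ∂_x(ρ u1) + ∂_y(ρ u2) + ∂_z(ρ u3) = 0` at every point where `Q > 0`. -/
theorem stmt_2 (γ K C c0 c1 c2 : ℝ) (hγ : 1 < γ) (hK : 0 < K)
    (a b : ℝ → ℝ) (ha : ∀ t, a t = c0 + c1 * t)
    (hb : ∀ t, b t = 3 * c0 * c1 * t + (3 / 2) * c1 ^ 2 * t ^ 2 + c2)
    (Q : ℝ → ℝ → ℝ → ℝ → ℝ)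
    (hQ : ∀ t x y z, Q t x y z
      = C ^ 2 * (x ^ 2 + y ^ 2 + z ^ 2 - x * y - y * z - x * z)
        - c1 * (x + y + z) + b t)
    (ρ u1 u2 u3 : ℝ → ℝ → ℝ → ℝ → ℝ)
    (hρ : ∀ t x y z, 0 < Q t x y z →
      ρ t x y z = ((γ - 1) / (K * γ) * Q t x y z) ^ (1 / (γ - 1)))
    (hu1 : ∀ t x y z, u1 t x y z = a t + C * (y - z))
    (hu2 : ∀ t x y z, u2 t x y z = a t + C * (-x + z))
    (hu3 : ∀ t x y z, u3 t x y z = a t + C * (x - y)) :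
    ∀ t x y z : ℝ, 0 < Q t x y z →
      deriv (fun s => ρ s x y z) t
        + deriv (fun s => ρ t s y z * u1 t s y z) x
        + deriv (fun s => ρ t x s z * u2 t x s z) y
        + deriv (fun s => ρ t x y s * u3 t x y s) z = 0 := by
  intro t x y z h
  have hk : 0 < (γ - 1) / (K * γ) := div_pos (by linarith) (mul_pos hK (by linarith))
  have hqt := hasDerivAt_quadratic (q := fun s => Q s x y z) (3 / 2 * c1 ^ 2) (3 * c0 * c1)
    (C ^ 2 * (x ^ 2 + y ^ 2 + z ^ 2 - x * y - y * z - x * z) - c1 * (x + y + z) + c2) t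
    (fun s => by simp only [hQ, hb]; ring)
  have hqx := hasDerivAt_quadratic (q := fun s => Q t s y z) (C ^ 2) (-C ^ 2 * (y + z) - c1)
    (C ^ 2 * (y ^ 2 + z ^ 2 - y * z) - c1 * (y + z) + b t) x
    (fun s => by simp only [hQ]; ring)
  have hqy := hasDerivAt_quadratic (q := fun s => Q t x s z) (C ^ 2) (-C ^ 2 * (x + z) - c1)
    (C ^ 2 * (x ^ 2 + z ^ 2 - x * z) - c1 * (x + z) + b t) y
    (fun s => by simp only [hQ]; ring)
  have hqz := hasDerivAt_quadratic (q := fun s => Q t x y s) (C ^ 2) (-C ^ 2 * (x + y) - c1)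
    (C ^ 2 * (x ^ 2 + y ^ 2 - x * y) - c1 * (x + y) + b t) z
    (fun s => by simp only [hQ]; ring)
  have ht := hasDerivAt_density hk hqt h (fun s hs => hρ s x y z hs)
  have hx := hasDerivAt_density hk hqx h (fun s hs => hρ t s y z hs)
  have hy := hasDerivAt_density hk hqy h (fun s hs => hρ t x s z hs)
  have hz := hasDerivAt_density hk hqz h (fun s hs => hρ t x y s hs)
  simp only [hu1, hu2, hu3]
  rw [ht.deriv, (hx.mul_const _).deriv, (hy.mul_const _).deriv, (hz.mul_const _).deriv]
  simp only [ha]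
  ring
end

section
/- Let γ > 1, K > 0, and let C, c0, c1, c2 be real constants. Set a(t) = c0 + c1·t, b(t) = 3c0·c1·t + (3/2)·c1²·t² + c2, Q(t,x,y,z) = C²(x² + y² + z² − xy − yz − xz) − c1·(x + y + z) + b(t), and on the open region where Q > 0 define ρ(t,x,y,z) = ((γ−1)/(K·γ) · Q(t,x,y,z))^{1/(γ−1)}, u1 = a(t) + C(y − z), u2 = a(t) + C(−x + z), u3 = a(t) + C(x − y), and P = K·ρ^γ. Then at every point (t,x,y,z) with Q(t,x,y,z) > 0, all three momentum equations hold: ρ·(∂uᵢ/∂t + u1·∂uᵢ/∂x + u2·∂uᵢ/∂y + u3·∂uᵢ/∂z) + ∂P/∂xᵢ = 0 for i = 1, 2, 3 (where x₁ = x, x₂ = y, x₃ = z). -/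
/-!
The velocity field is affine, so its material derivative is computed directly: it equals `-∇Q`.
On the open set `Q > 0` the pressure is `K ((γ-1)/(Kγ) Q)^{γ/(γ-1)}`, and the chain rule gives
`∇P = ρ ∇Q` (`deriv_pressure`), so the two terms of each momentum equation cancel.
-/

/-- The enthalpy relation `∂P = ρ ∂q` along a coordinate line, `q` being the restriction of `Q`
to that line. The formulas for `r` and `p` are only needed where `q > 0`, which is a neighbourhood
of `s` by continuity. -/
lemma deriv_pressure {γ K : ℝ} (hγ : 1 < γ) (hK : 0 < K) {q r p : ℝ → ℝ} {q' s : ℝ}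
    (hq : HasDerivAt q q' s) (hs : 0 < q s)
    (hr : ∀ w, 0 < q w → r w = ((γ - 1) / (K * γ) * q w) ^ (1 / (γ - 1)))
    (hp : ∀ w, 0 < q w → p w = K * r w ^ γ) :
    deriv p s = r s * q' := by
  have hγ1 : 0 < γ - 1 := by linarith
  have hγ0 : 0 < γ := by linarith
  have hk : 0 < (γ - 1) / (K * γ) := by positivity
  have hev : p =ᶠ[nhds s] fun w => K * ((γ - 1) / (K * γ) * q w) ^ (γ / (γ - 1)) := by
    filter_upwards [hq.continuousAt.eventually (lt_mem_nhds hs)] with w hw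
    rw [hp w hw, hr w hw, ← Real.rpow_mul (mul_pos hk hw).le]
    congr 2
    ring
  have hd := ((hq.const_mul ((γ - 1) / (K * γ))).rpow_const (p := γ / (γ - 1))
    (Or.inl (mul_pos hk hs).ne')).const_mul K
  have he : γ / (γ - 1) - 1 = 1 / (γ - 1) := by field_simp; ring
  rw [hev.deriv_eq, hd.deriv, he, ← hr s hs]
  field_simp

/-- A function of the form `A w² + B w + D` has derivative `2 A s + B` at `s`; this covers the
restrictions of `Q` and of the velocity components to coordinate lines. -/
lemma hasDerivAt_of_quadratic {f : ℝ → ℝ} (A B D s : ℝ) (hf : ∀ w, f w = A * w ^ 2 + B * w + D) :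
    HasDerivAt f (2 * A * s + B) s := by
  rw [funext hf]
  have h := ((((hasDerivAt_id s).pow 2).const_mul A).add
    ((hasDerivAt_id s).const_mul B)).add_const D
  refine HasDerivAt.congr_deriv h ?_
  simp
  ring

/-- Yuen's rotational solution for `γ > 1` satisfies all three momentum equations
`ρ(∂_t uᵢ + u·∇uᵢ) + ∂_{xᵢ} P = 0`, with `P = K ρ^γ`, at every point where `Q > 0`. -/
theorem stmt_3 (γ K C c0 c1 c2 : ℝ) (hγ : 1 < γ) (hK : 0 < K)
    (a b : ℝ → ℝ) (ha : ∀ t, a t = c0 + c1 * t)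
    (hb : ∀ t, b t = 3 * c0 * c1 * t + (3 / 2) * c1 ^ 2 * t ^ 2 + c2)
    (Q : ℝ → ℝ → ℝ → ℝ → ℝ)
    (hQ : ∀ t x y z, Q t x y z
      = C ^ 2 * (x ^ 2 + y ^ 2 + z ^ 2 - x * y - y * z - x * z)
        - c1 * (x + y + z) + b t)
    (ρ u1 u2 u3 P : ℝ → ℝ → ℝ → ℝ → ℝ)
    (hρ : ∀ t x y z, 0 < Q t x y z →
      ρ t x y z = ((γ - 1) / (K * γ) * Q t x y z) ^ (1 / (γ - 1)))
    (hu1 : ∀ t x y z, u1 t x y z = a t + C * (y - z))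
    (hu2 : ∀ t x y z, u2 t x y z = a t + C * (-x + z))
    (hu3 : ∀ t x y z, u3 t x y z = a t + C * (x - y))
    (hP : ∀ t x y z, 0 < Q t x y z → P t x y z = K * ρ t x y z ^ γ) :
    ∀ t x y z : ℝ, 0 < Q t x y z →
      (ρ t x y z * (deriv (fun s => u1 s x y z) t
          + u1 t x y z * deriv (fun s => u1 t s y z) x
          + u2 t x y z * deriv (fun s => u1 t x s z) y
          + u3 t x y z * deriv (fun s => u1 t x y s) z)
        + deriv (fun s => P t s y z) x = 0)
      ∧ (ρ t x y z * (deriv (fun s => u2 s x y z) t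
          + u1 t x y z * deriv (fun s => u2 t s y z) x
          + u2 t x y z * deriv (fun s => u2 t x s z) y
          + u3 t x y z * deriv (fun s => u2 t x y s) z)
        + deriv (fun s => P t x s z) y = 0)
      ∧ (ρ t x y z * (deriv (fun s => u3 s x y z) t
          + u1 t x y z * deriv (fun s => u3 t s y z) x
          + u2 t x y z * deriv (fun s => u3 t x s z) y
          + u3 t x y z * deriv (fun s => u3 t x y s) z)
        + deriv (fun s => P t x y s) z = 0) := by
  intro t x y z hpos
  have h1t : deriv (fun s => u1 s x y z) t = c1 := by
    rw [(hasDerivAt_of_quadratic 0 (c1) (c0 + C * (y - z)) t fun w => by simp only [hu1, ha]; ring).deriv]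
    ring
  have h1x : deriv (fun s => u1 t s y z) x = 0 := by
    rw [(hasDerivAt_of_quadratic 0 (0) (c0 + c1 * t + C * (y - z)) x fun w => by simp only [hu1, ha]; ring).deriv]
    ring
  have h1y : deriv (fun s => u1 t x s z) y = C := by
    rw [(hasDerivAt_of_quadratic 0 (C) (c0 + c1 * t + C * (0 - z)) y fun w => by simp only [hu1, ha]; ring).deriv]
    ring
  have h1z : deriv (fun s => u1 t x y s) z = -C := by
    rw [(hasDerivAt_of_quadratic 0 (-C) (c0 + c1 * t + C * (y - 0)) z fun w => by simp only [hu1, ha]; ring).deriv]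
    ring
  have h2t : deriv (fun s => u2 s x y z) t = c1 := by
    rw [(hasDerivAt_of_quadratic 0 (c1) (c0 + C * (-x + z)) t fun w => by simp only [hu2, ha]; ring).deriv]
    ring
  have h2x : deriv (fun s => u2 t s y z) x = -C := by
    rw [(hasDerivAt_of_quadratic 0 (-C) (c0 + c1 * t + C * (-0 + z)) x fun w => by simp only [hu2, ha]; ring).deriv]
    ring
  have h2y : deriv (fun s => u2 t x s z) y = 0 := by
    rw [(hasDerivAt_of_quadratic 0 (0) (c0 + c1 * t + C * (-x + z)) y fun w => by simp only [hu2, ha]; ring).deriv]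
    ring
  have h2z : deriv (fun s => u2 t x y s) z = C := by
    rw [(hasDerivAt_of_quadratic 0 (C) (c0 + c1 * t + C * (-x + 0)) z fun w => by simp only [hu2, ha]; ring).deriv]
    ring
  have h3t : deriv (fun s => u3 s x y z) t = c1 := by
    rw [(hasDerivAt_of_quadratic 0 (c1) (c0 + C * (x - y)) t fun w => by simp only [hu3, ha]; ring).deriv]
    ring
  have h3x : deriv (fun s => u3 t s y z) x = C := by
    rw [(hasDerivAt_of_quadratic 0 (C) (c0 + c1 * t + C * (0 - y)) x fun w => by simp only [hu3, ha]; ring).deriv]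
    ring
  have h3y : deriv (fun s => u3 t x s z) y = -C := by
    rw [(hasDerivAt_of_quadratic 0 (-C) (c0 + c1 * t + C * (x - 0)) y fun w => by simp only [hu3, ha]; ring).deriv]
    ring
  have h3z : deriv (fun s => u3 t x y s) z = 0 := by
    rw [(hasDerivAt_of_quadratic 0 (0) (c0 + c1 * t + C * (x - y)) z fun w => by simp only [hu3, ha]; ring).deriv]
    ring
  have hPx : deriv (fun s => P t s y z) x
      = ρ t x y z * (C ^ 2 * (2 * x - y - z) - c1) := by
    have hq := hasDerivAt_of_quadratic (f := fun s => Q t s y z) (C ^ 2) (-C ^ 2 * (y + z) - c1)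
      (C ^ 2 * (y ^ 2 + z ^ 2 - y * z) - c1 * (y + z) + b t) x
      fun w => by simp only [hQ]; ring
    rw [deriv_pressure hγ hK (r := fun s => ρ t s y z) hq hpos
      (fun w hw => hρ _ _ _ _ hw) (fun w hw => hP _ _ _ _ hw)]
    ring
  have hPy : deriv (fun s => P t x s z) y
      = ρ t x y z * (C ^ 2 * (2 * y - x - z) - c1) := by
    have hq := hasDerivAt_of_quadratic (f := fun s => Q t x s z) (C ^ 2) (-C ^ 2 * (x + z) - c1)
      (C ^ 2 * (x ^ 2 + z ^ 2 - x * z) - c1 * (x + z) + b t) y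
      fun w => by simp only [hQ]; ring
    rw [deriv_pressure hγ hK (r := fun s => ρ t x s z) hq hpos
      (fun w hw => hρ _ _ _ _ hw) (fun w hw => hP _ _ _ _ hw)]
    ring
  have hPz : deriv (fun s => P t x y s) z
      = ρ t x y z * (C ^ 2 * (2 * z - x - y) - c1) := by
    have hq := hasDerivAt_of_quadratic (f := fun s => Q t x y s) (C ^ 2) (-C ^ 2 * (x + y) - c1)
      (C ^ 2 * (x ^ 2 + y ^ 2 - x * y) - c1 * (x + y) + b t) z
      fun w => by simp only [hQ]; ring
    rw [deriv_pressure hγ hK (r := fun s => ρ t x y s) hq hpos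
      (fun w hw => hρ _ _ _ _ hw) (fun w hw => hP _ _ _ _ hw)]
    ring
  refine ⟨?_, ?_, ?_⟩
  · rw [h1t, h1x, h1y, h1z, hPx, hu1, hu2, hu3]
    ring
  · rw [h2t, h2x, h2y, h2z, hPy, hu1, hu2, hu3]
    ring
  · rw [h3t, h3x, h3y, h3z, hPz, hu1, hu2, hu3]
    ring
end

section
/- Let K > 0 and let C, c0, c1, c2 be real constants. Set a(t) = c0 + c1·t, b(t) = 3c0·c1·t + (3/2)·c1²·t² + c2, Q(t,x,y,z) = C²(x² + y² + z² − xy − yz − xz) − c1·(x + y + z) + b(t), ρ(t,x,y,z) = exp(Q(t,x,y,z)/K), u1 = a(t) + C(y − z), u2 = a(t) + C(−x + z), u3 = a(t) + C(x − y). Then for every (t,x,y,z) the continuity equation holds: ∂ρ/∂t + ∂(ρ·u1)/∂x + ∂(ρ·u2)/∂y + ∂(ρ·u3)/∂z = 0. -/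
/-!
Each velocity component `uᵢ` is independent of its own coordinate `xᵢ`, so the velocity field is
divergence free and the continuity equation reduces to the transport equation
`Q_t + u · ∇Q = 0`, multiplied by `ρ / K`. The transport equation is a polynomial identity:
the translation part `a (1, 1, 1)` of `u` contributes `-3 c₁ a`, which cancels `b' = 3 c₁ a`, and
the rotational part is orthogonal to `∇Q`. Along each coordinate line `Q` is a quadratic
polynomial, so one derivative formula, `deriv_exp_quadratic_mul`, covers all four terms.
-/

/-- The flux along one coordinate line: the factor `v` plays the role of the velocity component,
constant along that line (and `v = 1` gives the time derivative). -/
lemma deriv_exp_quadratic_mul {K A B D v q s : ℝ} {f : ℝ → ℝ}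
    (hf : ∀ r, f r = Real.exp ((A * r ^ 2 + B * r + D) / K) * v)
    (hq : q = A * s ^ 2 + B * s + D) :
    deriv f s = Real.exp (q / K) * ((2 * A * s + B) / K) * v := by
  have hpoly : HasDerivAt (fun r : ℝ => A * r ^ 2 + B * r + D) (2 * A * s + B) s := by
    have h := ((((hasDerivAt_id s).pow 2).const_mul A).add
      ((hasDerivAt_id s).const_mul B)).add_const D
    exact h.congr_deriv (by simp only [id]; push_cast; ring)
  rw [funext hf, hq]
  exact ((hpoly.div_const K).exp.mul_const v).deriv

/-- Yuen's rotational solution for `γ = 1` (isothermal pressure `P = Kρ`),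
with density `ρ = exp(Q/K)`, satisfies the continuity equation everywhere. -/
theorem stmt_4 (K C c0 c1 c2 : ℝ) (hK : 0 < K)
    (a b : ℝ → ℝ) (ha : ∀ t, a t = c0 + c1 * t)
    (hb : ∀ t, b t = 3 * c0 * c1 * t + (3 / 2) * c1 ^ 2 * t ^ 2 + c2)
    (Q : ℝ → ℝ → ℝ → ℝ → ℝ)
    (hQ : ∀ t x y z, Q t x y z
      = C ^ 2 * (x ^ 2 + y ^ 2 + z ^ 2 - x * y - y * z - x * z)
        - c1 * (x + y + z) + b t)
    (ρ u1 u2 u3 : ℝ → ℝ → ℝ → ℝ → ℝ)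
    (hρ : ∀ t x y z, ρ t x y z = Real.exp (Q t x y z / K))
    (hu1 : ∀ t x y z, u1 t x y z = a t + C * (y - z))
    (hu2 : ∀ t x y z, u2 t x y z = a t + C * (-x + z))
    (hu3 : ∀ t x y z, u3 t x y z = a t + C * (x - y)) :
    ∀ t x y z : ℝ,
      deriv (fun s => ρ s x y z) t
        + deriv (fun s => ρ t s y z * u1 t s y z) x
        + deriv (fun s => ρ t x s z * u2 t x s z) y
        + deriv (fun s => ρ t x y s * u3 t x y s) z = 0 := by
  intro t x y z
  have ht := deriv_exp_quadratic_mul (K := K) (s := t) (f := fun s => ρ s x y z)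
    (A := 3 / 2 * c1 ^ 2) (B := 3 * c0 * c1)
    (D := C ^ 2 * (x ^ 2 + y ^ 2 + z ^ 2 - x * y - y * z - x * z) - c1 * (x + y + z) + c2)
    (v := 1) (q := Q t x y z)
    (fun r => by simp only [hρ, hQ, hb, mul_one]; ring_nf) (by rw [hQ, hb]; ring)
  have hx := deriv_exp_quadratic_mul (K := K) (s := x) (f := fun s => ρ t s y z * u1 t s y z)
    (A := C ^ 2) (B := -C ^ 2 * (y + z) - c1)
    (D := C ^ 2 * (y ^ 2 + z ^ 2 - y * z) - c1 * (y + z) + b t)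
    (v := a t + C * (y - z)) (q := Q t x y z)
    (fun r => by simp only [hρ, hQ, hu1]; ring_nf) (by rw [hQ]; ring)
  have hy := deriv_exp_quadratic_mul (K := K) (s := y) (f := fun s => ρ t x s z * u2 t x s z)
    (A := C ^ 2) (B := -C ^ 2 * (x + z) - c1)
    (D := C ^ 2 * (x ^ 2 + z ^ 2 - x * z) - c1 * (x + z) + b t)
    (v := a t + C * (-x + z)) (q := Q t x y z)
    (fun r => by simp only [hρ, hQ, hu2]; ring_nf) (by rw [hQ]; ring)
  have hz := deriv_exp_quadratic_mul (K := K) (s := z) (f := fun s => ρ t x y s * u3 t x y s)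
    (A := C ^ 2) (B := -C ^ 2 * (x + y) - c1)
    (D := C ^ 2 * (x ^ 2 + y ^ 2 - x * y) - c1 * (x + y) + b t)
    (v := a t + C * (x - y)) (q := Q t x y z)
    (fun r => by simp only [hρ, hQ, hu3]; ring_nf) (by rw [hQ]; ring)
  rw [ht, hx, hy, hz, ha]
  ring
end

section
/- Let K > 0 and let C, c0, c1, c2 be real constants. Set a(t) = c0 + c1·t, b(t) = 3c0·c1·t + (3/2)·c1²·t² + c2, Q(t,x,y,z) = C²(x² + y² + z² − xy − yz − xz) − c1·(x + y + z) + b(t), ρ(t,x,y,z) = exp(Q(t,x,y,z)/K), u1 = a(t) + C(y − z), u2 = a(t) + C(−x + z), u3 = a(t) + C(x − y), and P = K·ρ. Then for every (t,x,y,z) all three momentum equations hold: ρ·(∂uᵢ/∂t + u1·∂uᵢ/∂x + u2·∂uᵢ/∂y + u3·∂uᵢ/∂z) + ∂P/∂xᵢ = 0 for i = 1, 2, 3 (where x₁ = x, x₂ = y, x₃ = z). -/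
/-!
Since `∇P = K ∇ρ = ρ ∇Q`, each momentum equation is `ρ` times the identity
`∂ₜuᵢ + (u·∇)uᵢ + ∂ᵢQ = 0`, which is polynomial. Here `∂ₜuᵢ = c1` cancels the linear
part `-c1` of `∂ᵢQ`; the convection term loses `a` because the coefficients of the rotation
sum to zero in each row, and what is left of it cancels the gradient of the quadratic part of `Q`.
All velocity derivatives are those of affine functions of one variable
(`deriv_of_affine`), all pressure derivatives those of the exponential of a quadratic
(`deriv_of_exp_quadratic`).
-/

theorem deriv_of_affine {f : ℝ → ℝ} (p q : ℝ) (h : ∀ s, f s = p + q * s) (x : ℝ) :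
    deriv f x = q := by
  rw [funext h]
  simp

theorem deriv_of_exp_quadratic {K : ℝ} (hK : K ≠ 0) {f : ℝ → ℝ} (A B D : ℝ)
    (h : ∀ s, f s = K * Real.exp ((A * s ^ 2 + B * s + D) / K)) (x : ℝ) :
    deriv f x = Real.exp ((A * x ^ 2 + B * x + D) / K) * (2 * A * x + B) := by
  rw [funext h]
  have hq : HasDerivAt (fun s : ℝ => (A * s ^ 2 + B * s + D) / K)
      ((A * (2 * x) + B) / K) x := by
    have h2 : HasDerivAt (fun s : ℝ => s ^ 2) (2 * x) x := by
      simpa using hasDerivAt_pow 2 x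
    have h1 : HasDerivAt (fun s : ℝ => B * s) B x := by
      simpa using (hasDerivAt_id x).const_mul B
    exact (((h2.const_mul A).add h1).add_const D).div_const K
  rw [(hq.exp.const_mul K).deriv]
  field_simp

/-- Yuen's rotational solution for `γ = 1` (isothermal pressure `P = Kρ`),
with density `ρ = exp(Q/K)`, satisfies all three momentum equations everywhere. -/
theorem stmt_5 (K C c0 c1 c2 : ℝ) (hK : 0 < K)
    (a b : ℝ → ℝ) (ha : ∀ t, a t = c0 + c1 * t)
    (hb : ∀ t, b t = 3 * c0 * c1 * t + (3 / 2) * c1 ^ 2 * t ^ 2 + c2)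
    (Q : ℝ → ℝ → ℝ → ℝ → ℝ)
    (hQ : ∀ t x y z, Q t x y z
      = C ^ 2 * (x ^ 2 + y ^ 2 + z ^ 2 - x * y - y * z - x * z)
        - c1 * (x + y + z) + b t)
    (ρ u1 u2 u3 P : ℝ → ℝ → ℝ → ℝ → ℝ)
    (hρ : ∀ t x y z, ρ t x y z = Real.exp (Q t x y z / K))
    (hu1 : ∀ t x y z, u1 t x y z = a t + C * (y - z))
    (hu2 : ∀ t x y z, u2 t x y z = a t + C * (-x + z))
    (hu3 : ∀ t x y z, u3 t x y z = a t + C * (x - y))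
    (hP : ∀ t x y z, P t x y z = K * ρ t x y z) :
    ∀ t x y z : ℝ,
      (ρ t x y z * (deriv (fun s => u1 s x y z) t
          + u1 t x y z * deriv (fun s => u1 t s y z) x
          + u2 t x y z * deriv (fun s => u1 t x s z) y
          + u3 t x y z * deriv (fun s => u1 t x y s) z)
        + deriv (fun s => P t s y z) x = 0)
      ∧ (ρ t x y z * (deriv (fun s => u2 s x y z) t
          + u1 t x y z * deriv (fun s => u2 t s y z) x
          + u2 t x y z * deriv (fun s => u2 t x s z) y
          + u3 t x y z * deriv (fun s => u2 t x y s) z)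
        + deriv (fun s => P t x s z) y = 0)
      ∧ (ρ t x y z * (deriv (fun s => u3 s x y z) t
          + u1 t x y z * deriv (fun s => u3 t s y z) x
          + u2 t x y z * deriv (fun s => u3 t x s z) y
          + u3 t x y z * deriv (fun s => u3 t x y s) z)
        + deriv (fun s => P t x y s) z = 0) := by
  intro t x y z
  have hPx : deriv (fun s => P t s y z) x
      = ρ t x y z * (C ^ 2 * (2 * x - y - z) - c1) := by
    rw [deriv_of_exp_quadratic hK.ne' (C ^ 2) (-C ^ 2 * (y + z) - c1)
      (C ^ 2 * (y ^ 2 + z ^ 2 - y * z) - c1 * (y + z) + b t)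
      (by intro s; rw [hP, hρ, hQ]; ring_nf) x, hρ, hQ]
    ring_nf
  have hPy : deriv (fun s => P t x s z) y
      = ρ t x y z * (C ^ 2 * (2 * y - x - z) - c1) := by
    rw [deriv_of_exp_quadratic hK.ne' (C ^ 2) (-C ^ 2 * (x + z) - c1)
      (C ^ 2 * (x ^ 2 + z ^ 2 - x * z) - c1 * (x + z) + b t)
      (by intro s; rw [hP, hρ, hQ]; ring_nf) y, hρ, hQ]
    ring_nf
  have hPz : deriv (fun s => P t x y s) z
      = ρ t x y z * (C ^ 2 * (2 * z - x - y) - c1) := by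
    rw [deriv_of_exp_quadratic hK.ne' (C ^ 2) (-C ^ 2 * (x + y) - c1)
      (C ^ 2 * (x ^ 2 + y ^ 2 - x * y) - c1 * (x + y) + b t)
      (by intro s; rw [hP, hρ, hQ]; ring_nf) z, hρ, hQ]
    ring_nf
  refine ⟨?_, ?_, ?_⟩
  · rw [deriv_of_affine (c0 + C * (y - z)) c1 (by intro s; rw [hu1, ha]; ring) t,
      deriv_of_affine (a t + C * y + (-C) * z) 0 (by intro s; rw [hu1]; ring) x,
      deriv_of_affine (a t + (-C) * z) C (by intro s; rw [hu1]; ring) y,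
      deriv_of_affine (a t + C * y) (-C) (by intro s; rw [hu1]; ring) z,
      hPx, hu1, hu2, hu3]
    ring
  · rw [deriv_of_affine (c0 + C * (-x + z)) c1 (by intro s; rw [hu2, ha]; ring) t,
      deriv_of_affine (a t + C * z) (-C) (by intro s; rw [hu2]; ring) x,
      deriv_of_affine (a t + (-C) * x + C * z) 0 (by intro s; rw [hu2]; ring) y,
      deriv_of_affine (a t + (-C) * x) C (by intro s; rw [hu2]; ring) z,
      hPy, hu1, hu2, hu3]
    ring
  · rw [deriv_of_affine (c0 + C * (x - y)) c1 (by intro s; rw [hu3, ha]; ring) t,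
      deriv_of_affine (a t + (-C) * y) C (by intro s; rw [hu3]; ring) x,
      deriv_of_affine (a t + C * x) (-C) (by intro s; rw [hu3]; ring) y,
      deriv_of_affine (a t + C * x + (-C) * y) 0 (by intro s; rw [hu3]; ring) z,
      hPz, hu1, hu2, hu3]
    ring
end

section
/- Let C be a real constant, let a1, a2, a3 : ℝ → ℝ be differentiable functions, and let b : ℝ → ℝ be any function. Define u1(t,x,y,z) = a1(t) + C(y + z), u2(t,x,y,z) = a2(t) + C(x + z), u3(t,x,y,z) = a3(t) + C(x + y), and φ(t,x,y,z) = −C²(x² + y² + z² + xy + yz + xz) − [a1'(t) + C(a2(t) + a3(t))]·x − [a2'(t) + C(a1(t) + a3(t))]·y − [a3'(t) + C(a1(t) + a2(t))]·z + b(t). Then for every (t,x,y,z): (i) ∂u1/∂x + ∂u2/∂y + ∂u3/∂z = 0, and (ii) ∂uᵢ/∂t + u1·∂uᵢ/∂x + u2·∂uᵢ/∂y + u3·∂uᵢ/∂z + ∂φ/∂xᵢ = 0 for i = 1, 2, 3 (where x₁ = x, x₂ = y, x₃ = z). That is, (u, φ) solves the 3-dimensional incompressible Euler equations with φ = P/ρ.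 -/
/-! The velocity gradient is the constant matrix with zero diagonal and all off-diagonal entries
`C`, so the divergence vanishes. The convective term of the first equation is `C * (u2 + u3)`, and
`∂u1/∂t + C * (u2 + u3) = a1' + C * (a2 + a3) + C ^ 2 * (2 * x + y + z)` is exactly `-∂φ/∂x`; the
other two components follow in the same way. -/

/-- In each single space variable the velocity components and the pressure potential are
polynomials of degree at most two, so this one formula gives every spatial derivative. -/
theorem deriv_of_eq_quadratic {f : ℝ → ℝ} (p q r : ℝ)
    (h : ∀ s, f s = p * s ^ 2 + q * s + r) (x : ℝ) : deriv f x = 2 * p * x + q := by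
  obtain rfl : f = fun s => p * s ^ 2 + q * s + r := funext h
  have hd := (((hasDerivAt_id x).pow 2).const_mul p).add ((hasDerivAt_id x).const_mul q)
  refine ((hd.add_const r).congr_deriv ?_).deriv
  simp
  ring

/-- Yuen's second family of rotational solutions to the 3-dimensional
incompressible Euler equations: the velocity field `u1 = a1(t)+C(y+z)`,
`u2 = a2(t)+C(x+z)`, `u3 = a3(t)+C(x+y)` is divergence-free and, together with
the pressure potential `φ = P/ρ`, satisfies the momentum equations. -/
theorem stmt_7 (C : ℝ) (a1 a2 a3 b : ℝ → ℝ)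
    (ha1 : Differentiable ℝ a1) (ha2 : Differentiable ℝ a2)
    (ha3 : Differentiable ℝ a3)
    (u1 u2 u3 φ : ℝ → ℝ → ℝ → ℝ → ℝ)
    (hu1 : ∀ t x y z, u1 t x y z = a1 t + C * (y + z))
    (hu2 : ∀ t x y z, u2 t x y z = a2 t + C * (x + z))
    (hu3 : ∀ t x y z, u3 t x y z = a3 t + C * (x + y))
    (hφ : ∀ t x y z, φ t x y z
      = -(C ^ 2) * (x ^ 2 + y ^ 2 + z ^ 2 + x * y + y * z + x * z)
        - (deriv a1 t + C * (a2 t + a3 t)) * x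
        - (deriv a2 t + C * (a1 t + a3 t)) * y
        - (deriv a3 t + C * (a1 t + a2 t)) * z + b t) :
    ∀ t x y z : ℝ,
      (deriv (fun s => u1 t s y z) x + deriv (fun s => u2 t x s z) y
        + deriv (fun s => u3 t x y s) z = 0)
      ∧ (deriv (fun s => u1 s x y z) t
          + u1 t x y z * deriv (fun s => u1 t s y z) x
          + u2 t x y z * deriv (fun s => u1 t x s z) y
          + u3 t x y z * deriv (fun s => u1 t x y s) z
          + deriv (fun s => φ t s y z) x = 0)
      ∧ (deriv (fun s => u2 s x y z) t
          + u1 t x y z * deriv (fun s => u2 t s y z) x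
          + u2 t x y z * deriv (fun s => u2 t x s z) y
          + u3 t x y z * deriv (fun s => u2 t x y s) z
          + deriv (fun s => φ t x s z) y = 0)
      ∧ (deriv (fun s => u3 s x y z) t
          + u1 t x y z * deriv (fun s => u3 t s y z) x
          + u2 t x y z * deriv (fun s => u3 t x s z) y
          + u3 t x y z * deriv (fun s => u3 t x y s) z
          + deriv (fun s => φ t x y s) z = 0) := by
  intro t x y z
  have ht1 : deriv (fun s => u1 s x y z) t = deriv a1 t := by
    simp only [hu1, deriv_add_const]
  have hu1x : deriv (fun s => u1 t s y z) x = 0 := by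
    rw [deriv_of_eq_quadratic 0 0 (a1 t + C * (y + z)) (fun s => by rw [hu1]; ring)]
    ring
  have hu1y : deriv (fun s => u1 t x s z) y = C := by
    rw [deriv_of_eq_quadratic 0 C (a1 t + C * z) (fun s => by rw [hu1]; ring)]
    ring
  have hu1z : deriv (fun s => u1 t x y s) z = C := by
    rw [deriv_of_eq_quadratic 0 C (a1 t + C * y) (fun s => by rw [hu1]; ring)]
    ring
  have ht2 : deriv (fun s => u2 s x y z) t = deriv a2 t := by
    simp only [hu2, deriv_add_const]
  have hu2x : deriv (fun s => u2 t s y z) x = C := by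
    rw [deriv_of_eq_quadratic 0 C (a2 t + C * z) (fun s => by rw [hu2]; ring)]
    ring
  have hu2y : deriv (fun s => u2 t x s z) y = 0 := by
    rw [deriv_of_eq_quadratic 0 0 (a2 t + C * (x + z)) (fun s => by rw [hu2]; ring)]
    ring
  have hu2z : deriv (fun s => u2 t x y s) z = C := by
    rw [deriv_of_eq_quadratic 0 C (a2 t + C * x) (fun s => by rw [hu2]; ring)]
    ring
  have ht3 : deriv (fun s => u3 s x y z) t = deriv a3 t := by
    simp only [hu3, deriv_add_const]
  have hu3x : deriv (fun s => u3 t s y z) x = C := by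
    rw [deriv_of_eq_quadratic 0 C (a3 t + C * y) (fun s => by rw [hu3]; ring)]
    ring
  have hu3y : deriv (fun s => u3 t x s z) y = C := by
    rw [deriv_of_eq_quadratic 0 C (a3 t + C * x) (fun s => by rw [hu3]; ring)]
    ring
  have hu3z : deriv (fun s => u3 t x y s) z = 0 := by
    rw [deriv_of_eq_quadratic 0 0 (a3 t + C * (x + y)) (fun s => by rw [hu3]; ring)]
    ring
  have hφx : deriv (fun s => φ t s y z) x
      = -(C ^ 2) * (2 * x + y + z) - (deriv a1 t + C * (a2 t + a3 t)) := by
    rw [deriv_of_eq_quadratic (-(C ^ 2))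
      (-(C ^ 2) * (y + z) - (deriv a1 t + C * (a2 t + a3 t)))
      (-(C ^ 2) * (y ^ 2 + z ^ 2 + y * z) - (deriv a2 t + C * (a1 t + a3 t)) * y
        - (deriv a3 t + C * (a1 t + a2 t)) * z + b t)
      (fun s => by rw [hφ]; ring)]
    ring
  have hφy : deriv (fun s => φ t x s z) y
      = -(C ^ 2) * (2 * y + x + z) - (deriv a2 t + C * (a1 t + a3 t)) := by
    rw [deriv_of_eq_quadratic (-(C ^ 2))
      (-(C ^ 2) * (x + z) - (deriv a2 t + C * (a1 t + a3 t)))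
      (-(C ^ 2) * (x ^ 2 + z ^ 2 + x * z) - (deriv a1 t + C * (a2 t + a3 t)) * x
        - (deriv a3 t + C * (a1 t + a2 t)) * z + b t)
      (fun s => by rw [hφ]; ring)]
    ring
  have hφz : deriv (fun s => φ t x y s) z
      = -(C ^ 2) * (2 * z + x + y) - (deriv a3 t + C * (a1 t + a2 t)) := by
    rw [deriv_of_eq_quadratic (-(C ^ 2))
      (-(C ^ 2) * (x + y) - (deriv a3 t + C * (a1 t + a2 t)))
      (-(C ^ 2) * (x ^ 2 + y ^ 2 + x * y) - (deriv a1 t + C * (a2 t + a3 t)) * x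
        - (deriv a2 t + C * (a1 t + a3 t)) * y + b t)
      (fun s => by rw [hφ]; ring)]
    ring
  rw [ht1, ht2, ht3, hu1x, hu1y, hu1z, hu2x, hu2y, hu2z, hu3x, hu3y, hu3z, hφx, hφy, hφz,
    hu1, hu2, hu3]
  refine ⟨?_, ?_, ?_, ?_⟩ <;> ring
end

section
/- Let C be a real constant, μ ≥ 0, let a1, a2, a3 : ℝ → ℝ be differentiable functions, and let b : ℝ → ℝ be any function. Define u1(t,x,y,z) = a1(t) + C(y + z), u2(t,x,y,z) = a2(t) + C(x + z), u3(t,x,y,z) = a3(t) + C(x + y), and φ(t,x,y,z) = −C²(x² + y² + z² + xy + yz + xz) − [a1'(t) + C(a2(t) + a3(t))]·x − [a2'(t) + C(a1(t) + a3(t))]·y − [a3'(t) + C(a1(t) + a2(t))]·z + b(t). Then for every (t,x,y,z): (i) ∂u1/∂x + ∂u2/∂y + ∂u3/∂z = 0, and (ii) ∂uᵢ/∂t + u1·∂uᵢ/∂x + u2·∂uᵢ/∂y + u3·∂uᵢ/∂z + ∂φ/∂xᵢ = μ·(∂²uᵢ/∂x² + ∂²uᵢ/∂y² + ∂²uᵢ/∂z²)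 for i = 1, 2, 3. That is, (u, φ) solves the 3-dimensional incompressible Navier–Stokes equations with φ = P/ρ. -/
/-!
The velocity is affine in the space variables, with constant gradient matrix `C (J - I)`, where `J` is
the all-ones matrix. This matrix has zero trace, so the flow is divergence-free, and its
entries do not depend on position, so every Laplacian vanishes and the viscosity plays no role. In each
space variable separately the pressure potential is a quadratic polynomial
(`deriv_quadratic`), and its derivative cancels the sum of the time derivative and the convective
term, which is a polynomial identity.
-/

theorem deriv_affine_left (a C c x : ℝ) : deriv (fun s : ℝ => a + C * (s + c)) x = C := by
  simp

theorem deriv_affine_right (a C c x : ℝ) : deriv (fun s : ℝ => a + C * (c + s)) x = C := by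
  simp

theorem deriv_quadratic (A B D x : ℝ) :
    deriv (fun s : ℝ => A * s ^ 2 + B * s + D) x = 2 * A * x + B := by
  have h : HasDerivAt (fun s : ℝ => A * s ^ 2 + B * s + D)
      (A * (2 * x) + B * 1) x := by
    simpa using (((hasDerivAt_pow 2 x).const_mul A).add
      ((hasDerivAt_id x).const_mul B)).add_const D
  rw [h.deriv]
  ring

/-- Yuen's second family of rotational solutions solves the 3-dimensional
incompressible Navier–Stokes equations: the velocity field is divergence-free
and, with pressure potential `φ = P/ρ`, satisfies `∂_t uᵢ + u·∇uᵢ + ∂_{xᵢ}φ = μ Δuᵢ`. -/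
theorem stmt_11 (C μ : ℝ) (hμ : 0 ≤ μ) (a1 a2 a3 b : ℝ → ℝ)
    (ha1 : Differentiable ℝ a1) (ha2 : Differentiable ℝ a2)
    (ha3 : Differentiable ℝ a3)
    (u1 u2 u3 φ : ℝ → ℝ → ℝ → ℝ → ℝ)
    (hu1 : ∀ t x y z, u1 t x y z = a1 t + C * (y + z))
    (hu2 : ∀ t x y z, u2 t x y z = a2 t + C * (x + z))
    (hu3 : ∀ t x y z, u3 t x y z = a3 t + C * (x + y))
    (hφ : ∀ t x y z, φ t x y z
      = -(C ^ 2) * (x ^ 2 + y ^ 2 + z ^ 2 + x * y + y * z + x * z)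
        - (deriv a1 t + C * (a2 t + a3 t)) * x
        - (deriv a2 t + C * (a1 t + a3 t)) * y
        - (deriv a3 t + C * (a1 t + a2 t)) * z + b t) :
    ∀ t x y z : ℝ,
      (deriv (fun s => u1 t s y z) x + deriv (fun s => u2 t x s z) y
        + deriv (fun s => u3 t x y s) z = 0)
      ∧ (deriv (fun s => u1 s x y z) t
          + u1 t x y z * deriv (fun s => u1 t s y z) x
          + u2 t x y z * deriv (fun s => u1 t x s z) y
          + u3 t x y z * deriv (fun s => u1 t x y s) z
          + deriv (fun s => φ t s y z) x
          = μ * (deriv (fun s => deriv (fun r => u1 t r y z) s) x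
              + deriv (fun s => deriv (fun r => u1 t x r z) s) y
              + deriv (fun s => deriv (fun r => u1 t x y r) s) z))
      ∧ (deriv (fun s => u2 s x y z) t
          + u1 t x y z * deriv (fun s => u2 t s y z) x
          + u2 t x y z * deriv (fun s => u2 t x s z) y
          + u3 t x y z * deriv (fun s => u2 t x y s) z
          + deriv (fun s => φ t x s z) y
          = μ * (deriv (fun s => deriv (fun r => u2 t r y z) s) x
              + deriv (fun s => deriv (fun r => u2 t x r z) s) y
              + deriv (fun s => deriv (fun r => u2 t x y r) s) z))
      ∧ (deriv (fun s => u3 s x y z) t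
          + u1 t x y z * deriv (fun s => u3 t s y z) x
          + u2 t x y z * deriv (fun s => u3 t x s z) y
          + u3 t x y z * deriv (fun s => u3 t x y s) z
          + deriv (fun s => φ t x y s) z
          = μ * (deriv (fun s => deriv (fun r => u3 t r y z) s) x
              + deriv (fun s => deriv (fun r => u3 t x r z) s) y
              + deriv (fun s => deriv (fun r => u3 t x y r) s) z)) := by
  intro t x y z
  have hx : deriv (fun s => φ t s y z) x
      = -(C ^ 2) * (2 * x + y + z) - (deriv a1 t + C * (a2 t + a3 t)) := by
    have e : (fun s => φ t s y z) = fun s : ℝ => -(C ^ 2) * s ^ 2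
        + (-(C ^ 2) * (y + z) - (deriv a1 t + C * (a2 t + a3 t))) * s
        + (-(C ^ 2) * (y ^ 2 + z ^ 2 + y * z)
          - (deriv a2 t + C * (a1 t + a3 t)) * y
          - (deriv a3 t + C * (a1 t + a2 t)) * z + b t) := by
      funext s
      rw [hφ]
      ring
    rw [e, deriv_quadratic]
    ring
  have hy : deriv (fun s => φ t x s z) y
      = -(C ^ 2) * (2 * y + x + z) - (deriv a2 t + C * (a1 t + a3 t)) := by
    have e : (fun s => φ t x s z) = fun s : ℝ => -(C ^ 2) * s ^ 2
        + (-(C ^ 2) * (x + z) - (deriv a2 t + C * (a1 t + a3 t))) * s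
        + (-(C ^ 2) * (x ^ 2 + z ^ 2 + x * z)
          - (deriv a1 t + C * (a2 t + a3 t)) * x
          - (deriv a3 t + C * (a1 t + a2 t)) * z + b t) := by
      funext s
      rw [hφ]
      ring
    rw [e, deriv_quadratic]
    ring
  have hz : deriv (fun s => φ t x y s) z
      = -(C ^ 2) * (2 * z + x + y) - (deriv a3 t + C * (a1 t + a2 t)) := by
    have e : (fun s => φ t x y s) = fun s : ℝ => -(C ^ 2) * s ^ 2
        + (-(C ^ 2) * (x + y) - (deriv a3 t + C * (a1 t + a2 t))) * s
        + (-(C ^ 2) * (x ^ 2 + y ^ 2 + x * y)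
          - (deriv a1 t + C * (a2 t + a3 t)) * x
          - (deriv a2 t + C * (a1 t + a3 t)) * y + b t) := by
      funext s
      rw [hφ]
      ring
    rw [e, deriv_quadratic]
    ring
  rw [hx, hy, hz]
  simp only [hu1, hu2, hu3, deriv_affine_left, deriv_affine_right, deriv_add_const,
    deriv_const]
  refine ⟨?_, ?_, ?_, ?_⟩ <;> ring
end

section
/- Let K > 0 and let C, c0, c1, c2 be real constants. Set b(t) = 3c0·c1·t + (3/2)·c1²·t² + c2 and Q(t,x,y,z) = C²(x² + y² + z² − xy − yz − xz) − c1·(x + y + z) + b(t), and define the density ρ(t,x,y,z) = exp(Q(t,x,y,z)/K). Then for every fixed time t, the total mass is infinite: ∫_{ℝ³} ρ(t,x,y,z) dx dy dz = +∞ (i.e., the function (x,y,z) ↦ ρ(t,x,y,z) is not Lebesgue integrable on ℝ³ and its integral equals +∞). -/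
/-! The quadratic part of `Q` is positive semidefinite, since
`2 (x² + y² + z² - xy - yz - xz) = (x - y)² + (y - z)² + (x - z)²`. Hence `ρ ≥ exp (b t / K) > 0`
wherever `c1 * (x + y + z) ≤ 0`. That region contains the octant `A ×ˢ A ×ˢ A`, where `A` is a
half-line on which `c1 * x ≤ 0`; the octant has infinite volume, so the integral of a positive
constant over it is already infinite. -/

open MeasureTheory

/-- The density `ρ = exp(Q/K)` of Yuen's isothermal (`γ = 1`) rotational solution
has infinite total mass at every time: `∫_{ℝ³} ρ(t,·) = +∞`. -/
theorem stmt_12 (K C c0 c1 c2 : ℝ) (hK : 0 < K)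
    (b : ℝ → ℝ)
    (hb : ∀ t, b t = 3 * c0 * c1 * t + (3 / 2) * c1 ^ 2 * t ^ 2 + c2)
    (Q : ℝ → ℝ → ℝ → ℝ → ℝ)
    (hQ : ∀ t x y z, Q t x y z
      = C ^ 2 * (x ^ 2 + y ^ 2 + z ^ 2 - x * y - y * z - x * z)
        - c1 * (x + y + z) + b t)
    (ρ : ℝ → ℝ → ℝ → ℝ → ℝ)
    (hρ : ∀ t x y z, ρ t x y z = Real.exp (Q t x y z / K)) :
    ∀ t : ℝ,
      ∫⁻ p : ℝ × ℝ × ℝ, ENNReal.ofReal (ρ t p.1 p.2.1 p.2.2) = ⊤ := by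
  intro t
  obtain ⟨A, hA, hvol, hneg⟩ :
      ∃ A : Set ℝ, MeasurableSet A ∧ volume A = ⊤ ∧ ∀ x ∈ A, c1 * x ≤ 0 := by
    rcases le_total c1 0 with h | h
    · exact ⟨Set.Ici 0, measurableSet_Ici, Real.volume_Ici,
        fun x hx => mul_nonpos_of_nonpos_of_nonneg h hx⟩
    · exact ⟨Set.Iic 0, measurableSet_Iic, Real.volume_Iic,
        fun x hx => mul_nonpos_of_nonneg_of_nonpos h hx⟩
  have hS : MeasurableSet (A ×ˢ A ×ˢ A) := hA.prod (hA.prod hA)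
  have hSvol : volume (A ×ˢ A ×ˢ A) = ⊤ := by
    simp [Measure.volume_eq_prod, Measure.prod_prod, hvol]
  rw [eq_top_iff]
  calc (⊤ : ENNReal)
      = ENNReal.ofReal (Real.exp (b t / K)) * volume (A ×ˢ A ×ˢ A) := by
        rw [hSvol, ENNReal.mul_top]
        exact (ENNReal.ofReal_pos.2 (Real.exp_pos _)).ne'
    _ = ∫⁻ _ in A ×ˢ A ×ˢ A, ENNReal.ofReal (Real.exp (b t / K)) :=
        (setLIntegral_const _ _).symm
    _ ≤ ∫⁻ p in A ×ˢ A ×ˢ A, ENNReal.ofReal (ρ t p.1 p.2.1 p.2.2) := by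
        refine setLIntegral_mono' hS ?_
        rintro ⟨x, y, z⟩ ⟨hx, hy, hz⟩
        have hx := hneg x hx
        have hy := hneg y hy
        have hz := hneg z hz
        have hquad : 0 ≤ C ^ 2 * (x ^ 2 + y ^ 2 + z ^ 2 - x * y - y * z - x * z) :=
          mul_nonneg (sq_nonneg C)
            (by nlinarith [sq_nonneg (x - y), sq_nonneg (y - z), sq_nonneg (x - z)])
        dsimp only
        rw [hρ, hQ]
        gcongr
        linarith
    _ ≤ _ := setLIntegral_le_lintegral _ _
end

section
/- Let γ > 1, K > 0, and let C, c0, c1, c2 be real constants with C ≠ 0. Set b(t) = 3c0·c1·t + (3/2)·c1²·t² + c2, Q(t,x,y,z) = C²(x² + y² + z² − xy − yz − xz) − c1·(x + y + z) + b(t), and define the density ρ(t,x,y,z) = (max{(γ−1)/(K·γ)·Q(t,x,y,z), 0})^{1/(γ−1)}. Then for every fixed time t, the total mass is infinite: ∫_{ℝ³} ρ(t,x,y,z) dx dy dz = +∞. -/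
open MeasureTheory

/-!
The quadratic form in `Q` grows quadratically along the half-line `x → +∞` with `y, z` bounded,
while the other terms grow at most linearly. So `(γ - 1) / (K * γ) * Q ≥ 1`, and hence `ρ ≥ 1`,
on a whole half-infinite box `[R, ∞) × [0, 1] × [0, 1]` (`exists_le_quadratic`). This box has
infinite volume, so the integral of `ρ` over it is already infinite.
-/

/-- On a half-infinite box `[R, ∞) × [0, 1] × [0, 1]`, the quadratic form dominates any affine
perturbation and any prescribed level `M`. -/
lemma exists_le_quadratic (C c β M : ℝ) (hC : C ≠ 0) (hM : 0 ≤ M) :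
    ∃ R : ℝ, ∀ x y z : ℝ, R ≤ x → 0 ≤ y → y ≤ 1 → 0 ≤ z → z ≤ 1 →
      M ≤ C ^ 2 * (x ^ 2 + y ^ 2 + z ^ 2 - x * y - y * z - x * z) - c * (x + y + z) + β := by
  have hC2 : 0 < C ^ 2 := by positivity
  -- For `x ≥ 4` the form is at least `x ^ 2 / 2` and `x + y + z ≤ 2 * x`, so it suffices that
  -- `C ^ 2 * x ≥ 4 * |c| + 2 * |β| + 2 * M`.
  refine ⟨4 + (4 * |c| + 2 * |β| + 2 * M) / C ^ 2, fun x y z hx hy0 hy1 hz0 hz1 => ?_⟩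
  have hnum : 0 ≤ 4 * |c| + 2 * |β| + 2 * M := by positivity
  have hdiv : 0 ≤ (4 * |c| + 2 * |β| + 2 * M) / C ^ 2 := by positivity
  have hx4 : 4 ≤ x := by linarith
  have hCx : 4 * |c| + 2 * |β| + 2 * M ≤ x * C ^ 2 :=
    (div_le_iff₀ hC2).1 (by linarith)
  have hform : x ^ 2 / 2 ≤ x ^ 2 + y ^ 2 + z ^ 2 - x * y - y * z - x * z := by
    nlinarith [sq_nonneg (y - z), sq_nonneg y, sq_nonneg z,
      mul_nonneg (by linarith : 0 ≤ x) (by linarith : 0 ≤ 2 - y - z),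
      mul_nonneg (by linarith : 0 ≤ x) (by linarith : 0 ≤ x - 4)]
  have hquad := mul_le_mul_of_nonneg_left hform hC2.le
  have hlin : c * (x + y + z) ≤ |c| * (2 * x) :=
    (mul_le_mul_of_nonneg_right (le_abs_self c) (by linarith)).trans
      (mul_le_mul_of_nonneg_left (by linarith) (abs_nonneg c))
  have hgrow := mul_le_mul_of_nonneg_right hCx (by linarith : 0 ≤ x)
  have hconst : |β| + M ≤ (|β| + M) * x :=
    le_mul_of_one_le_right (by positivity) (by linarith)
  nlinarith [neg_abs_le β]

/-- The density `ρ = (max{(γ−1)/(Kγ)·Q, 0})^{1/(γ−1)}` of Yuen's rotational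
solution for `γ > 1` (with `C ≠ 0`) has infinite total mass at every time:
`∫_{ℝ³} ρ(t,·) = +∞`. -/
theorem stmt_13 (γ K C c0 c1 c2 : ℝ) (hγ : 1 < γ) (hK : 0 < K) (hC : C ≠ 0)
    (b : ℝ → ℝ)
    (hb : ∀ t, b t = 3 * c0 * c1 * t + (3 / 2) * c1 ^ 2 * t ^ 2 + c2)
    (Q : ℝ → ℝ → ℝ → ℝ → ℝ)
    (hQ : ∀ t x y z, Q t x y z
      = C ^ 2 * (x ^ 2 + y ^ 2 + z ^ 2 - x * y - y * z - x * z)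
        - c1 * (x + y + z) + b t)
    (ρ : ℝ → ℝ → ℝ → ℝ → ℝ)
    (hρ : ∀ t x y z,
      ρ t x y z = max ((γ - 1) / (K * γ) * Q t x y z) 0 ^ (1 / (γ - 1))) :
    ∀ t : ℝ,
      ∫⁻ p : ℝ × ℝ × ℝ, ENNReal.ofReal (ρ t p.1 p.2.1 p.2.2) = ⊤ := by
  intro t
  have hκ : 0 < (γ - 1) / (K * γ) := div_pos (by linarith) (mul_pos hK (by linarith))
  obtain ⟨R, hR⟩ := exists_le_quadratic C c1 (b t) ((γ - 1) / (K * γ))⁻¹ hC (inv_nonneg.2 hκ.le)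
  set S : Set (ℝ × ℝ × ℝ) := Set.Ici R ×ˢ Set.Icc 0 1 ×ˢ Set.Icc 0 1 with hS
  have hSmeas : MeasurableSet S :=
    measurableSet_Ici.prod (measurableSet_Icc.prod measurableSet_Icc)
  have hSvol : volume S = ⊤ := by
    rw [hS, Measure.volume_eq_prod, Measure.prod_prod, Measure.volume_eq_prod, Measure.prod_prod]
    simp
  have hone : ∀ p ∈ S, 1 ≤ ENNReal.ofReal (ρ t p.1 p.2.1 p.2.2) := by
    rintro ⟨x, y, z⟩ ⟨hx, ⟨hy0, hy1⟩, ⟨hz0, hz1⟩⟩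
    have hQ1 : ((γ - 1) / (K * γ))⁻¹ ≤ Q t x y z := by
      rw [hQ]
      exact hR x y z hx hy0 hy1 hz0 hz1
    rw [ENNReal.one_le_ofReal, hρ]
    refine Real.one_le_rpow (le_max_of_le_left ?_) (one_div_nonneg.2 (by linarith))
    exact (inv_le_iff_one_le_mul₀' hκ).1 hQ1
  refine top_unique ?_
  calc (⊤ : ENNReal) = ∫⁻ _ in S, 1 := by rw [setLIntegral_one, hSvol]
    _ ≤ ∫⁻ p in S, ENNReal.ofReal (ρ t p.1 p.2.1 p.2.2) := setLIntegral_mono' hSmeas hone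
    _ ≤ ∫⁻ p : ℝ × ℝ × ℝ, ENNReal.ofReal (ρ t p.1 p.2.1 p.2.2) := setLIntegral_le_lintegral _ _
end
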